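/- The intrinsic torsion ξ of an almost quaternion-Hermitian 4n-manifold (n > 1) lies in (K+E)H precisely when there is a three-form ψ ∈ (K+E)H ⊂ Λ³T*M with ⟨Y, ξ_X Z⟩ = (3ψ + Σ_{A=I,J,K}(−A_{(23)}ψ + (2/n) Aθ^ψ ⊗ ω_A))(X,Y,Z), where θ^ψ = IΛ_Iψ = JΛ_Jψ = KΛ_Kψ. Moreover, for a given intrinsic torsion ξ ∈ (K+E)H the three-form ψ is unique and is given by 48(n−1)ψ = (n−1) d*Ω + (1/2) Σ_{A=I,J,K} Aθ^{d*Ω} ∧ ω_A, where θ^{d*Ω} = (1/3) Σ_{A=I,J,K} AΛ_A d*Ω. -/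

import Mathlib

/-!  Synthetic (Koszul-style) model of an almost quaternion-Hermitian `4n`-manifold.

`C` plays the role of the commutative ℝ-algebra of smooth functions and `V` that of
the `C`-module of vector fields, equipped with a directional derivative `D`, a Lie
bracket, a Riemannian metric `g` together with its Levi-Civita connection `nab`
(characterised by being torsion-free and metric), a local adapted basis `I, J, K`
of anticommuting almost complex structures with `K = I J`, each compatible with the
metric, and a (local) orthonormal frame.  -/

noncomputable section

open scoped BigOperators

structure AQH (n : ℕ) (C : Type*) (V : Type*) [CommRing C] [Algebra ℝ C]
    [AddCommGroup V] [Module C V] where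
  /-- derivative of a function along a vector field -/
  D : V → C → C
  D_add : ∀ X f g, D X (f + g) = D X f + D X g
  D_mul : ∀ X f g, D X (f * g) = f * D X g + g * D X f
  D_const : ∀ X (r : ℝ), D X (algebraMap ℝ C r) = 0
  D_addX : ∀ X Y f, D (X + Y) f = D X f + D Y f
  D_smulX : ∀ (f : C) (X : V) (h : C), D (f • X) h = f * D X h
  /-- the Lie bracket of vector fields -/
  bracket : V → V → V
  bracket_skew : ∀ X Y, bracket X Y = -bracket Y X
  bracket_add : ∀ X Y Z, bracket X (Y + Z) = bracket X Y + bracket X Z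
  bracket_smul : ∀ X (f : C) Y, bracket X (f • Y) = f • bracket X Y + (D X f) • Y
  bracket_jacobi : ∀ X Y Z,
    bracket X (bracket Y Z) + bracket Y (bracket Z X) + bracket Z (bracket X Y) = 0
  D_bracket : ∀ X Y f, D (bracket X Y) f = D X (D Y f) - D Y (D X f)
  /-- the Riemannian metric -/
  g : V → V → C
  g_symm : ∀ X Y, g X Y = g Y X
  g_add : ∀ X Y Z, g (X + Y) Z = g X Z + g Y Z
  g_smul : ∀ (f : C) X Y, g (f • X) Y = f * g X Y
  /-- the Levi-Civita connection -/
  nab : V → V → V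
  nab_addX : ∀ X Y Z, nab (X + Y) Z = nab X Z + nab Y Z
  nab_smulX : ∀ (f : C) X Y, nab (f • X) Y = f • nab X Y
  nab_add : ∀ X Y Z, nab X (Y + Z) = nab X Y + nab X Z
  nab_leibniz : ∀ X (f : C) Y, nab X (f • Y) = f • nab X Y + (D X f) • Y
  torsion_free : ∀ X Y, nab X Y - nab Y X = bracket X Y
  nab_metric : ∀ X Y Z, D X (g Y Z) = g (nab X Y) Z + g Y (nab X Z)
  /-- the (local) adapted basis of almost complex structures -/
  I : V → V
  J : V → V
  K : V → V
  I_lin : ∀ (f : C) X Y, I (f • X + Y) = f • I X + I Y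
  J_lin : ∀ (f : C) X Y, J (f • X + Y) = f • J X + J Y
  K_lin : ∀ (f : C) X Y, K (f • X + Y) = f • K X + K Y
  I_sq : ∀ X, I (I X) = -X
  J_sq : ∀ X, J (J X) = -X
  K_def : ∀ X, K X = I (J X)
  anticomm : ∀ X, I (J X) = -J (I X)
  I_metric : ∀ X Y, g (I X) (I Y) = g X Y
  J_metric : ∀ X Y, g (J X) (J Y) = g X Y
  /-- a (local) orthonormal frame -/
  frame : Fin (4 * n) → V
  frame_orthonormal : ∀ i j, g (frame i) (frame j) = if i = j then 1 else 0
  frame_span : ∀ X, X = ∑ i, g X (frame i) • frame i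

namespace AQH

section ops

variable {C V : Type*} [CommRing C]

/-- the operator `A_(1)` on covariant 3-tensors -/
def op1 (A : V → V) (ψ : V → V → V → C) : V → V → V → C := fun X Y Z => -ψ (A X) Y Z

/-- the operator `A_(2)` on covariant 3-tensors -/
def op2 (A : V → V) (ψ : V → V → V → C) : V → V → V → C := fun X Y Z => -ψ X (A Y) Z

/-- the operator `A_(3)` on covariant 3-tensors -/
def op3 (A : V → V) (ψ : V → V → V → C) : V → V → V → C := fun X Y Z => -ψ X Y (A Z)

/-- the operator `A_(12) = A_(1) A_(2)` on covariant 3-tensors -/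
def op12 (A : V → V) (ψ : V → V → V → C) : V → V → V → C := fun X Y Z => ψ (A X) (A Y) Z

/-- the operator `A_(13) = A_(1) A_(3)` on covariant 3-tensors -/
def op13 (A : V → V) (ψ : V → V → V → C) : V → V → V → C := fun X Y Z => ψ (A X) Y (A Z)

/-- the operator `A_(23) = A_(2) A_(3)` on covariant 3-tensors -/
def op23 (A : V → V) (ψ : V → V → V → C) : V → V → V → C := fun X Y Z => ψ X (A Y) (A Z)

/-- the operator `𝓛_A = A_(12) + A_(13) + A_(23)` on three-forms -/
def calL (A : V → V) (ψ : V → V → V → C) : V → V → V → C :=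
  fun X Y Z => op12 A ψ X Y Z + op13 A ψ X Y Z + op23 A ψ X Y Z

/-- the action `(A ν)(X) = -ν (A X)` of `A` on a one-form -/
def act1 (A : V → V) (ν : V → C) : V → C := fun X => -ν (A X)

/-- the action `(A ψ)(X,Y,Z) = -ψ(AX,AY,AZ)` of `A` on a three-form -/
def act3 (A : V → V) (ψ : V → V → V → C) : V → V → V → C :=
  fun X Y Z => -ψ (A X) (A Y) (A Z)

/-- wedge product of two one-forms -/
def wedge11 (α β : V → C) : V → V → C := fun X Y => α X * β Y - α Y * β X

/-- wedge product of a one-form and a two-form -/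
def wedge12 (ν : V → C) (ω : V → V → C) : V → V → V → C :=
  fun X Y Z => ν X * ω Y Z - ν Y * ω X Z + ν Z * ω X Y

/-- wedge product of two two-forms -/
def wedge22 (α β : V → V → C) : V → V → V → V → C := fun X Y Z W =>
  α X Y * β Z W - α X Z * β Y W + α X W * β Y Z
    + α Z W * β X Y - α Y W * β X Z + α Y Z * β X W

/-- a (0,3)-tensor is an alternating three-form -/
def IsAlt3 (T : V → V → V → C) : Prop :=
  (∀ X Y Z, T Y X Z = -T X Y Z) ∧ (∀ X Y Z, T X Z Y = -T X Y Z)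

variable [AddCommGroup V] [Module C V]

/-- `C`-linearity (tensoriality) of a three-form in its first argument -/
def Lin3 (T : V → V → V → C) : Prop :=
  ∀ (f : C) X X' Y Z, T (f • X + X') Y Z = f * T X Y Z + T X' Y Z

/-- `C`-linearity (tensoriality) of a one-form -/
def Lin1 (ν : V → C) : Prop := ∀ (f : C) X X', ν (f • X + X') = f * ν X + ν X'

end ops

section derived

variable {n : ℕ} {C V : Type*} [CommRing C] [Algebra ℝ C] [AddCommGroup V] [Module C V]
  [Module ℝ V] [IsScalarTower ℝ C V]

variable (M : AQH n C V)

/-- the Kähler form `ω_A(X,Y) = g(X, A Y)` -/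
def omega (A : V → V) : V → V → C := fun X Y => M.g X (A Y)

/-- `(∇_X A) Y` -/
def nabA (A : V → V) : V → V → V := fun X Y => M.nab X (A Y) - A (M.nab X Y)

/-- covariant derivative of a 2-form: `(∇_X ψ)(Y,Z)` -/
def nab2 (ψ : V → V → C) : V → V → V → C :=
  fun X Y Z => M.D X (ψ Y Z) - ψ (M.nab X Y) Z - ψ Y (M.nab X Z)

/-- covariant derivative of a 4-form -/
def nab4 (ψ : V → V → V → V → C) : V → V → V → V → V → C :=
  fun X Y Z W U => M.D X (ψ Y Z W U) - ψ (M.nab X Y) Z W U - ψ Y (M.nab X Z) W U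
    - ψ Y Z (M.nab X W) U - ψ Y Z W (M.nab X U)

/-- exterior derivative of a one-form -/
def d1 (ν : V → C) : V → V → C :=
  fun X Y => M.D X (ν Y) - M.D Y (ν X) - ν (M.bracket X Y)

/-- exterior derivative of a two-form -/
def d2 (ψ : V → V → C) : V → V → V → C :=
  fun X Y Z => M.D X (ψ Y Z) - M.D Y (ψ X Z) + M.D Z (ψ X Y)
    - ψ (M.bracket X Y) Z + ψ (M.bracket X Z) Y - ψ (M.bracket Y Z) X

/-- exterior derivative of a four-form -/
def d4 (ψ : V → V → V → V → C) : V → V → V → V → V → C := fun X Y Z W U =>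
  M.D X (ψ Y Z W U) - M.D Y (ψ X Z W U) + M.D Z (ψ X Y W U) - M.D W (ψ X Y Z U)
      + M.D U (ψ X Y Z W)
    - ψ (M.bracket X Y) Z W U + ψ (M.bracket X Z) Y W U - ψ (M.bracket X W) Y Z U
      + ψ (M.bracket X U) Y Z W
    - ψ (M.bracket Y Z) X W U + ψ (M.bracket Y W) X Z U - ψ (M.bracket Y U) X Z W
    - ψ (M.bracket Z W) X Y U + ψ (M.bracket Z U) X Y W
    - ψ (M.bracket W U) X Y Z

/-- the Nijenhuis tensor `N_A(X,Y)` -/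
def nijV (A : V → V) : V → V → V := fun X Y =>
  M.bracket X Y + A (M.bracket (A X) Y) + A (M.bracket X (A Y)) - M.bracket (A X) (A Y)

/-- the Nijenhuis `(0,3)`-tensor `N_A(X,Y,Z) = g(X, N_A(Y,Z))` -/
def nij3 (A : V → V) : V → V → V → C := fun X Y Z => M.g X (M.nijV A Y Z)

/-- the induced inner product of two 2-forms,
`⟨ψ,φ⟩ = (1/2!) ψ(e_i,e_j) φ(e_i,e_j)` -/
def inner2 (ψ φ : V → V → C) : C :=
  (1/2 : ℝ) • ∑ i, ∑ j, ψ (M.frame i) (M.frame j) * φ (M.frame i) (M.frame j)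

/-- the contraction `(Λ_A β)(X) = ⟨X ⌟ β, ω_A⟩` of a three-form -/
def Lam (A : V → V) (β : V → V → V → C) : V → C :=
  fun X => (1/2 : ℝ) •
    ∑ i, ∑ j, β X (M.frame i) (M.frame j) * M.omega A (M.frame i) (M.frame j)

/-- `λ_I(X) = (1/2n) ⟨∇_X ω_J, ω_K⟩` -/
def lambdaI : V → C := fun X =>
  (1/(2*(n:ℝ))) • M.inner2 (fun Y Z => M.nab2 (M.omega M.J) X Y Z) (M.omega M.K)

/-- `λ_J(X) = (1/2n) ⟨∇_X ω_K, ω_I⟩` -/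
def lambdaJ : V → C := fun X =>
  (1/(2*(n:ℝ))) • M.inner2 (fun Y Z => M.nab2 (M.omega M.K) X Y Z) (M.omega M.I)

/-- `λ_K(X) = (1/2n) ⟨∇_X ω_I, ω_J⟩` -/
def lambdaK : V → C := fun X =>
  (1/(2*(n:ℝ))) • M.inner2 (fun Y Z => M.nab2 (M.omega M.I) X Y Z) (M.omega M.J)

/-- codifferential of a two-form -/
def codiff2 (ψ : V → V → C) : V → C := fun Z => -∑ i, M.nab2 ψ (M.frame i) (M.frame i) Z

/-- codifferential of a four-form -/
def codiff4 (ψ : V → V → V → V → C) : V → V → V → C :=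
  fun X Y Z => -∑ i, M.nab4 ψ (M.frame i) (M.frame i) X Y Z

/-- `β_I = J dω_J + K dω_K` -/
def betaI : V → V → V → C := fun X Y Z =>
  act3 M.J (M.d2 (M.omega M.J)) X Y Z + act3 M.K (M.d2 (M.omega M.K)) X Y Z

/-- `β_J = K dω_K + I dω_I` -/
def betaJ : V → V → V → C := fun X Y Z =>
  act3 M.K (M.d2 (M.omega M.K)) X Y Z + act3 M.I (M.d2 (M.omega M.I)) X Y Z

/-- `β_K = I dω_I + J dω_J` -/
def betaK : V → V → V → C := fun X Y Z =>
  act3 M.I (M.d2 (M.omega M.I)) X Y Z + act3 M.J (M.d2 (M.omega M.J)) X Y Z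

/-- the intrinsic torsion
`ξ_X Y = -(1/4) Σ_A A (∇_X A) Y + (1/2) Σ_A λ_A(X) A Y` -/
def xi : V → V → V := fun X Y =>
  (-(1/4 : ℝ)) • (M.I (M.nabA M.I X Y) + M.J (M.nabA M.J X Y) + M.K (M.nabA M.K X Y))
    + (1/2 : ℝ) • (M.lambdaI X • M.I Y + M.lambdaJ X • M.J Y + M.lambdaK X • M.K Y)

/-- the one-form `ν^I_4 = I Λ_I β_I` -/
def nu4I : V → C := act1 M.I (M.Lam M.I M.betaI)

/-- the one-form `ν^J_4 = J Λ_J β_J` -/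
def nu4J : V → C := act1 M.J (M.Lam M.J M.betaJ)

/-- the one-form `ν^K_4 = K Λ_K β_K` -/
def nu4K : V → C := act1 M.K (M.Lam M.K M.betaK)

/-- `ν^I_3`, determined by `J Λ_J β_I = (1/(2n-1)) (ν^I_4 + (2n+1)(n-1) ν^I_3)` -/
def nu3I : V → C := fun X =>
  (1/((2*(n:ℝ)+1) * ((n:ℝ)-1))) •
    ((2*(n:ℝ)-1) • act1 M.J (M.Lam M.J M.betaI) X - M.nu4I X)

/-- `ν^J_3`, determined by `K Λ_K β_J = (1/(2n-1)) (ν^J_4 + (2n+1)(n-1) ν^J_3)` -/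
def nu3J : V → C := fun X =>
  (1/((2*(n:ℝ)+1) * ((n:ℝ)-1))) •
    ((2*(n:ℝ)-1) • act1 M.K (M.Lam M.K M.betaJ) X - M.nu4J X)

/-- `ν^K_3`, determined by `I Λ_I β_K = (1/(2n-1)) (ν^K_4 + (2n+1)(n-1) ν^K_3)` -/
def nu3K : V → C := fun X =>
  (1/((2*(n:ℝ)+1) * ((n:ℝ)-1))) •
    ((2*(n:ℝ)-1) • act1 M.I (M.Lam M.I M.betaK) X - M.nu4K X)

/-- `β^{(E)}_{3I} = -(1/2) Jν^I_3 ∧ ω_J - (1/2) Kν^I_3 ∧ ω_K + (1/(2n-1)) Iν^I_3 ∧ ω_I` -/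
def betaE3I : V → V → V → C := fun X Y Z =>
  (-(1/2:ℝ)) • wedge12 (act1 M.J M.nu3I) (M.omega M.J) X Y Z
    + (-(1/2:ℝ)) • wedge12 (act1 M.K M.nu3I) (M.omega M.K) X Y Z
    + (1/(2*(n:ℝ)-1)) • wedge12 (act1 M.I M.nu3I) (M.omega M.I) X Y Z

def betaE3J : V → V → V → C := fun X Y Z =>
  (-(1/2:ℝ)) • wedge12 (act1 M.K M.nu3J) (M.omega M.K) X Y Z
    + (-(1/2:ℝ)) • wedge12 (act1 M.I M.nu3J) (M.omega M.I) X Y Z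
    + (1/(2*(n:ℝ)-1)) • wedge12 (act1 M.J M.nu3J) (M.omega M.J) X Y Z

def betaE3K : V → V → V → C := fun X Y Z =>
  (-(1/2:ℝ)) • wedge12 (act1 M.I M.nu3K) (M.omega M.I) X Y Z
    + (-(1/2:ℝ)) • wedge12 (act1 M.J M.nu3K) (M.omega M.J) X Y Z
    + (1/(2*(n:ℝ)-1)) • wedge12 (act1 M.K M.nu3K) (M.omega M.K) X Y Z

/-- `β_{4I} = -(1/(2n-1)) Iν^I_4 ∧ ω_I` -/
def beta4I : V → V → V → C := fun X Y Z =>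
  (-(1/(2*(n:ℝ)-1))) • wedge12 (act1 M.I M.nu4I) (M.omega M.I) X Y Z

def beta4J : V → V → V → C := fun X Y Z =>
  (-(1/(2*(n:ℝ)-1))) • wedge12 (act1 M.J M.nu4J) (M.omega M.J) X Y Z

def beta4K : V → V → V → C := fun X Y Z =>
  (-(1/(2*(n:ℝ)-1))) • wedge12 (act1 M.K M.nu4K) (M.omega M.K) X Y Z

/-- `β_I^{(3+K)} = β_I - β^{(E)}_{3I} - β_{4I}` -/
def beta3KI : V → V → V → C := fun X Y Z => M.betaI X Y Z - M.betaE3I X Y Z - M.beta4I X Y Z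

def beta3KJ : V → V → V → C := fun X Y Z => M.betaJ X Y Z - M.betaE3J X Y Z - M.beta4J X Y Z

def beta3KK : V → V → V → C := fun X Y Z => M.betaK X Y Z - M.betaE3K X Y Z - M.beta4K X Y Z

/-- `β_I^{(3)} = (1/6) (2 - 𝓛_J - 𝓛_K) β_I^{(3+K)}` -/
def beta3I : V → V → V → C := fun X Y Z =>
  (1/6:ℝ) • ((2:ℝ) • M.beta3KI X Y Z - calL M.J M.beta3KI X Y Z - calL M.K M.beta3KI X Y Z)

def beta3J : V → V → V → C := fun X Y Z =>
  (1/6:ℝ) • ((2:ℝ) • M.beta3KJ X Y Z - calL M.K M.beta3KJ X Y Z - calL M.I M.beta3KJ X Y Z)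

def beta3K : V → V → V → C := fun X Y Z =>
  (1/6:ℝ) • ((2:ℝ) • M.beta3KK X Y Z - calL M.I M.beta3KK X Y Z - calL M.J M.beta3KK X Y Z)

/-- `β_I^{(K)} = (1/6) (4 + 𝓛_J + 𝓛_K) β_I^{(3+K)}` -/
def betaKI : V → V → V → C := fun X Y Z =>
  (1/6:ℝ) • ((4:ℝ) • M.beta3KI X Y Z + calL M.J M.beta3KI X Y Z + calL M.K M.beta3KI X Y Z)

def betaKJ : V → V → V → C := fun X Y Z =>
  (1/6:ℝ) • ((4:ℝ) • M.beta3KJ X Y Z + calL M.K M.beta3KJ X Y Z + calL M.I M.beta3KJ X Y Z)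

def betaKK : V → V → V → C := fun X Y Z =>
  (1/6:ℝ) • ((4:ℝ) • M.beta3KK X Y Z + calL M.I M.beta3KK X Y Z + calL M.J M.beta3KK X Y Z)

/-- the three-form `ψ^{(3)} = (1/12)(β_I^{(3)} + β_J^{(3)} + β_K^{(3)})` determining `ξ_{33}` -/
def psi3 : V → V → V → C := fun X Y Z =>
  (1/12:ℝ) • (M.beta3I X Y Z + M.beta3J X Y Z + M.beta3K X Y Z)

/-- the three-form `ψ^{(K)} = -(1/48)(β_I^{(K)} + β_J^{(K)} + β_K^{(K)})` determining `ξ_{KH}` -/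
def psiK : V → V → V → C := fun X Y Z =>
  (-(1/48:ℝ)) • (M.betaKI X Y Z + M.betaKJ X Y Z + M.betaKK X Y Z)

/-- the three-form `ψ^{(3)}_I` determining `ξ_{3H}` -/
def psi3I : V → V → V → C := fun X Y Z =>
  (-(1/8:ℝ)) • M.beta3I X Y Z
    + (1/48:ℝ) • ((3:ℝ) • (M.beta3I X Y Z + M.beta3J X Y Z + M.beta3K X Y Z)
        + calL M.I (fun a b c => M.beta3I a b c + M.beta3J a b c + M.beta3K a b c) X Y Z)

def psi3J : V → V → V → C := fun X Y Z =>
  (-(1/8:ℝ)) • M.beta3J X Y Z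
    + (1/48:ℝ) • ((3:ℝ) • (M.beta3I X Y Z + M.beta3J X Y Z + M.beta3K X Y Z)
        + calL M.J (fun a b c => M.beta3I a b c + M.beta3J a b c + M.beta3K a b c) X Y Z)

def psi3K : V → V → V → C := fun X Y Z =>
  (-(1/8:ℝ)) • M.beta3K X Y Z
    + (1/48:ℝ) • ((3:ℝ) • (M.beta3I X Y Z + M.beta3J X Y Z + M.beta3K X Y Z)
        + calL M.K (fun a b c => M.beta3I a b c + M.beta3J a b c + M.beta3K a b c) X Y Z)

/-- the three-form `ψ^{(K)}_I` determining `ξ_{K3}` -/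
def psiKI : V → V → V → C := fun X Y Z =>
  (-(1/2:ℝ)) • M.betaKI X Y Z
    + (1/6:ℝ) • (M.betaKI X Y Z + M.betaKJ X Y Z + M.betaKK X Y Z)

def psiKJ : V → V → V → C := fun X Y Z =>
  (-(1/2:ℝ)) • M.betaKJ X Y Z
    + (1/6:ℝ) • (M.betaKI X Y Z + M.betaKJ X Y Z + M.betaKK X Y Z)

def psiKK : V → V → V → C := fun X Y Z =>
  (-(1/2:ℝ)) • M.betaKK X Y Z
    + (1/6:ℝ) • (M.betaKI X Y Z + M.betaKJ X Y Z + M.betaKK X Y Z)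

/-- the one-form `θ^ξ` determining `ξ_{EH}`,
defined by `(6/n)(2n+1)(n-1) θ^ξ(X) = -⟨ξ_{e_i} e_i, X⟩` -/
def thetaXi : V → C := fun X =>
  (-((n:ℝ)/(6*(2*(n:ℝ)+1)*((n:ℝ)-1)))) • ∑ i, M.g (M.xi (M.frame i) (M.frame i)) X

/-- the local one-form `θ^ξ_I`, defined by `(2/n)(2n+1)(n-1) θ^ξ_I(X) = -⟨I ξ_{e_i} I e_i, X⟩` -/
def thetaXiI : V → C := fun X =>
  (-((n:ℝ)/(2*(2*(n:ℝ)+1)*((n:ℝ)-1)))) •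
    ∑ i, M.g (M.I (M.xi (M.frame i) (M.I (M.frame i)))) X

def thetaXiJ : V → C := fun X =>
  (-((n:ℝ)/(2*(2*(n:ℝ)+1)*((n:ℝ)-1)))) •
    ∑ i, M.g (M.J (M.xi (M.frame i) (M.J (M.frame i)))) X

def thetaXiK : V → C := fun X =>
  (-((n:ℝ)/(2*(2*(n:ℝ)+1)*((n:ℝ)-1)))) •
    ∑ i, M.g (M.K (M.xi (M.frame i) (M.K (M.frame i)))) X

/-- `α_I = -λ_I ⊗ g + (1/2)(J_(2) - J_(3)) ∇ω_K` -/
def alphaI : V → V → V → C := fun X Y Z =>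
  -(M.lambdaI X * M.g Y Z)
    + (1/2:ℝ) • (-(M.nab2 (M.omega M.K) X (M.J Y) Z) + M.nab2 (M.omega M.K) X Y (M.J Z))

def alphaJ : V → V → V → C := fun X Y Z =>
  -(M.lambdaJ X * M.g Y Z)
    + (1/2:ℝ) • (-(M.nab2 (M.omega M.I) X (M.K Y) Z) + M.nab2 (M.omega M.I) X Y (M.K Z))

def alphaK : V → V → V → C := fun X Y Z =>
  -(M.lambdaK X * M.g Y Z)
    + (1/2:ℝ) • (-(M.nab2 (M.omega M.J) X (M.I Y) Z) + M.nab2 (M.omega M.J) X Y (M.I Z))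

/-- the one-form `η_I(X) = α_I(e_i; e_i, X)` -/
def etaI : V → C := fun X => ∑ i, M.alphaI (M.frame i) (M.frame i) X

def etaJ : V → C := fun X => ∑ i, M.alphaJ (M.frame i) (M.frame i) X

def etaK : V → C := fun X => ∑ i, M.alphaK (M.frame i) (M.frame i) X

/-- the fundamental four-form `Ω = Σ_A ω_A ∧ ω_A` -/
def Omega4 : V → V → V → V → C := fun X Y Z W =>
  wedge22 (M.omega M.I) (M.omega M.I) X Y Z W
    + wedge22 (M.omega M.J) (M.omega M.J) X Y Z W
    + wedge22 (M.omega M.K) (M.omega M.K) X Y Z W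

/-- the one-form `θ^{d*Ω} = (1/3) Σ_A A Λ_A d*Ω` -/
def thetaDOmega : V → C := fun X =>
  (1/3:ℝ) • (act1 M.I (M.Lam M.I (M.codiff4 M.Omega4)) X
    + act1 M.J (M.Lam M.J (M.codiff4 M.Omega4)) X
    + act1 M.K (M.Lam M.K (M.codiff4 M.Omega4)) X)

/-- the vector-valued torsion: `g(W, T(X,Y)) = T(W,X,Y)` -/
def Tvec (T : V → V → V → C) : V → V → V := fun X Y => ∑ i, T (M.frame i) X Y • M.frame i

/-- the connection `∇ + (1/2) T` associated to a torsion (0,3)-tensor `T` -/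
def nabT (T : V → V → V → C) : V → V → V := fun X Y => M.nab X Y + (1/2:ℝ) • M.Tvec T X Y

/-- a connection is metric -/
def MetricConn (nab' : V → V → V) : Prop :=
  ∀ X Y Z, M.D X (M.g Y Z) = M.g (nab' X Y) Z + M.g Y (nab' X Z)

/-- a connection is quaternionic, with associated local one-forms `γ_I, γ_J, γ_K`:
`∇'_X I = γ_K(X) J - γ_J(X) K`, and cyclically -/
def QuatConn (nab' : V → V → V) (γI γJ γK : V → C) : Prop :=
  (∀ X Y, nab' X (M.I Y) - M.I (nab' X Y) = γK X • M.J Y - γJ X • M.K Y) ∧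
  (∀ X Y, nab' X (M.J Y) - M.J (nab' X Y) = γI X • M.K Y - γK X • M.I Y) ∧
  (∀ X Y, nab' X (M.K Y) - M.K (nab' X Y) = γJ X • M.I Y - γI X • M.J Y)

/-- the HKT condition: `I, J, K` integrable and there is a metric connection
`∇ + (1/2)T` with totally skew torsion making `I, J, K` parallel -/
def IsHKT : Prop :=
  (∀ X Y, M.nijV M.I X Y = 0) ∧ (∀ X Y, M.nijV M.J X Y = 0) ∧
  (∀ X Y, M.nijV M.K X Y = 0) ∧
  ∃ T : V → V → V → C, IsAlt3 T ∧ Lin3 T ∧ M.MetricConn (M.nabT T) ∧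
    (∀ X Y, M.nabT T X (M.I Y) = M.I (M.nabT T X Y)) ∧
    (∀ X Y, M.nabT T X (M.J Y) = M.J (M.nabT T X Y)) ∧
    (∀ X Y, M.nabT T X (M.K Y) = M.K (M.nabT T X Y))

/-- membership of a three-form in `KH`: type `{2,1}` for each `A` and `Λ_A ψ = 0` -/
def InKH3 (ψ : V → V → V → C) : Prop :=
  IsAlt3 ψ ∧ Lin3 ψ ∧
  calL M.I ψ = ψ ∧ calL M.J ψ = ψ ∧ calL M.K ψ = ψ ∧
  M.Lam M.I ψ = 0 ∧ M.Lam M.J ψ = 0 ∧ M.Lam M.K ψ = 0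

/-- the `(0,3)`-tensor of the `KH`-component of the torsion determined by `ψ^{(K)}`:
`3ψ - Σ_A A_(23) ψ` -/
def xiKH3 (ψ : V → V → V → C) : V → V → V → C := fun X Y Z =>
  (3:ℝ) • ψ X Y Z - (op23 M.I ψ X Y Z + op23 M.J ψ X Y Z + op23 M.K ψ X Y Z)

/-- the `(0,3)`-tensor of the `EH`-component of the torsion determined by the
one-form `θ`: `3 e_i ⊗ e_i ∧ θ - Σ_A (e_i ⊗ A e_i ∧ A θ + (2/n) A θ ⊗ ω_A)` -/
def xiEH3 (θ : V → C) : V → V → V → C := fun X Y Z =>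
  (3:ℝ) • ∑ i, M.g (M.frame i) X *
      (M.g (M.frame i) Y * θ Z - M.g (M.frame i) Z * θ Y)
  - ((∑ i, M.g (M.frame i) X *
        (M.g (M.I (M.frame i)) Y * act1 M.I θ Z - M.g (M.I (M.frame i)) Z * act1 M.I θ Y))
    + (∑ i, M.g (M.frame i) X *
        (M.g (M.J (M.frame i)) Y * act1 M.J θ Z - M.g (M.J (M.frame i)) Z * act1 M.J θ Y))
    + (∑ i, M.g (M.frame i) X *
        (M.g (M.K (M.frame i)) Y * act1 M.K θ Z - M.g (M.K (M.frame i)) Z * act1 M.K θ Y)))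
  - (2/(n:ℝ)) • (act1 M.I θ X * M.omega M.I Y Z + act1 M.J θ X * M.omega M.J Y Z
      + act1 M.K θ X * M.omega M.K Y Z)

/-- the intrinsic torsion lies in `(K+E)H`: it is the sum of a `KH`-tensor and an
`EH`-tensor as described in §3 of the paper -/
def inKEH : Prop :=
  ∃ (ψ : V → V → V → C) (θ : V → C), M.InKH3 ψ ∧ Lin1 θ ∧
    ∀ X Y Z, M.g Y (M.xi X Z) = M.xiKH3 ψ X Y Z + M.xiEH3 θ X Y Z

end derived

end AQH

namespace AQH

variable {n : ℕ} {C V : Type*} [CommRing C] [Algebra ℝ C] [AddCommGroup V] [Module C V]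
  [Module ℝ V] [IsScalarTower ℝ C V]

variable (M : AQH n C V)

/-- The intrinsic torsion is given by the three-form `ψ ∈ (K+E)H ⊂ Λ³T*M` via
`⟨Y, ξ_X Z⟩ = (3ψ + Σ_A (-A_(23)ψ + (2/n) Aθ^ψ ⊗ ω_A))(X,Y,Z)`
with `θ^ψ = IΛ_Iψ = JΛ_Jψ = KΛ_Kψ`. -/
def KEHparam (ψ : V → V → V → C) : Prop :=
  -- `ψ` is a three-form in `(K+E)H`, i.e. of type `{2,1}` for each of `I, J, K`
  IsAlt3 ψ ∧ Lin3 ψ ∧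
  calL M.I ψ = ψ ∧ calL M.J ψ = ψ ∧ calL M.K ψ = ψ ∧
  -- `θ^ψ = IΛ_Iψ = JΛ_Jψ = KΛ_Kψ`
  act1 M.I (M.Lam M.I ψ) = act1 M.J (M.Lam M.J ψ) ∧
  act1 M.J (M.Lam M.J ψ) = act1 M.K (M.Lam M.K ψ) ∧
  -- the parametrization of the intrinsic torsion by `ψ`
  ∀ X Y Z, M.g Y (M.xi X Z) =
    (3:ℝ) • ψ X Y Z
      - (op23 M.I ψ X Y Z + op23 M.J ψ X Y Z + op23 M.K ψ X Y Z)
      + (2/(n:ℝ)) • (act1 M.I (act1 M.I (M.Lam M.I ψ)) X * M.omega M.I Y Z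
          + act1 M.J (act1 M.I (M.Lam M.I ψ)) X * M.omega M.J Y Z
          + act1 M.K (act1 M.I (M.Lam M.I ψ)) X * M.omega M.K Y Z)

end AQH

namespace AQH

section proofs

set_option linter.unusedSectionVars false
set_option linter.unusedSimpArgs false

variable {n : ℕ} {C V : Type*} [CommRing C] [Algebra ℝ C] [AddCommGroup V] [Module C V]

variable (M : AQH n C V)

/-- linearity of an endomorphism -/
def LinA (C : Type*) {V : Type*} [CommRing C] [AddCommGroup V] [Module C V] (A : V → V) : Prop :=
  ∀ (f : C) X Y, A (f • X + Y) = f • A X + A Y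

theorem LinA.zero {A : V → V} (h : LinA C A) : A 0 = 0 := by
  have := h (1:C) 0 0
  simpa using this

theorem LinA.neg {A : V → V} (h : LinA C A) (X : V) : A (-X) = -A X := by
  have := h (-1:C) X 0
  simpa [h.zero] using this

theorem LinA.add {A : V → V} (h : LinA C A) (X Y : V) : A (X + Y) = A X + A Y := by
  have := h (1:C) X Y
  simpa using this

theorem LinA.smul {A : V → V} (h : LinA C A) (f : C) (X : V) : A (f • X) = f • A X := by
  have := h f X 0
  simpa [h.zero] using this

theorem LinA.sub {A : V → V} (h : LinA C A) (X Y : V) : A (X - Y) = A X - A Y := by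
  rw [sub_eq_add_neg, h.add, h.neg, sub_eq_add_neg]

theorem Lin1.zero {A : V → C} (h : Lin1 A) : A 0 = 0 := by
  have := h (1:C) 0 0
  simpa using this

theorem Lin1.neg {A : V → C} (h : Lin1 A) (X : V) : A (-X) = -A X := by
  have := h (-1:C) X 0
  simpa [h.zero] using this

theorem Lin1.add {A : V → C} (h : Lin1 A) (X Y : V) : A (X + Y) = A X + A Y := by
  have := h (1:C) X Y
  simpa using this

theorem Lin1.smul {A : V → C} (h : Lin1 A) (f : C) (X : V) : A (f • X) = f * A X := by
  have := h f X 0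
  simpa [h.zero] using this

theorem Lin1.sum {A : V → C} (h : Lin1 A) {ι : Type*} (s : Finset ι) (v : ι → V) :
    A (∑ i ∈ s, v i) = ∑ i ∈ s, A (v i) := by
  classical
  induction s using Finset.induction_on with
  | empty => simp [h.zero]
  | insert a s ha ih => rw [Finset.sum_insert ha, Finset.sum_insert ha, h.add, ih]

theorem Lin1.comp {ν : V → C} (h : Lin1 ν) {A : V → V} (hA : LinA C A) :
    Lin1 (fun X => ν (A X)) := by
  intro f X Y
  simp only [hA f X Y, h f]

theorem Lin1.negf {ν : V → C} (h : Lin1 ν) : Lin1 (fun X => -ν X) := by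
  intro f X Y
  simp only [h f X Y]; ring

theorem Lin1.act {ν : V → C} (h : Lin1 ν) {A : V → V} (hA : LinA C A) : Lin1 (act1 A ν) :=
  (h.comp hA).negf

theorem g_lin1 (Y : V) : Lin1 (fun X => M.g X Y) := by
  intro f X X'
  simp only [M.g_add, M.g_smul]

theorem g_lin2 (Y : V) : Lin1 (fun X => M.g Y X) := by
  intro f X X'
  simp only [M.g_symm Y, M.g_add, M.g_smul]

theorem g_negl (X Y : V) : M.g (-X) Y = -M.g X Y := (M.g_lin1 Y).neg X
theorem g_negr (X Y : V) : M.g X (-Y) = -M.g X Y := (M.g_lin2 X).neg Y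
theorem g_addr (X Y Z : V) : M.g X (Y + Z) = M.g X Y + M.g X Z := (M.g_lin2 X).add Y Z
theorem g_smulr (f : C) (X Y : V) : M.g X (f • Y) = f * M.g X Y := (M.g_lin2 X).smul f Y
theorem g_subr (X Y Z : V) : M.g X (Y - Z) = M.g X Y - M.g X Z := by
  rw [sub_eq_add_neg, g_addr, g_negr, sub_eq_add_neg]

/-- contraction with the frame -/
theorem contr {ν : V → C} (h : Lin1 ν) (X : V) :
    ∑ i, M.g (M.frame i) X * ν (M.frame i) = ν X := by
  conv_rhs => rw [M.frame_span X, h.sum]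
  refine Finset.sum_congr rfl fun i _ => ?_
  rw [h.smul, M.g_symm]

theorem contr' {ν : V → C} (h : Lin1 ν) (X : V) :
    ∑ i, M.g X (M.frame i) * ν (M.frame i) = ν X := by
  rw [← M.contr h X]
  exact Finset.sum_congr rfl fun i _ => by rw [M.g_symm]

/-- quaternionic triples -/
structure QT (A B D : V → V) : Prop where
  la : LinA C A
  lb : LinA C B
  ld : LinA C D
  aa : ∀ X, A (A X) = -X
  bb : ∀ X, B (B X) = -X
  dd : ∀ X, D (D X) = -X
  ab : ∀ X, A (B X) = D X
  ba : ∀ X, B (A X) = -D X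
  bd : ∀ X, B (D X) = A X
  db : ∀ X, D (B X) = -A X
  da : ∀ X, D (A X) = B X
  ad : ∀ X, A (D X) = -B X
  ga : ∀ X Y, M.g (A X) Y = -M.g X (A Y)
  gb : ∀ X Y, M.g (B X) Y = -M.g X (B Y)
  gd : ∀ X Y, M.g (D X) Y = -M.g X (D Y)

variable {M}

theorem QT.rot {A B D : V → V} (h : M.QT A B D) : M.QT B D A :=
  ⟨h.lb, h.ld, h.la, h.bb, h.dd, h.aa, h.bd, h.db, h.da, h.ad, h.ab, h.ba, h.gb, h.gd, h.ga⟩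

variable (M)

theorem qt : M.QT M.I M.J M.K := by
  have lI : LinA C M.I := M.I_lin
  have lJ : LinA C M.J := M.J_lin
  have lK : LinA C M.K := M.K_lin
  have ba : ∀ X, M.J (M.I X) = -M.K X := fun X => by rw [M.K_def, M.anticomm, neg_neg]
  have ga : ∀ X Y, M.g (M.I X) Y = -M.g X (M.I Y) := fun X Y => by
    rw [← M.I_metric X (M.I Y), M.I_sq, g_negr, neg_neg]
  have gb : ∀ X Y, M.g (M.J X) Y = -M.g X (M.J Y) := fun X Y => by
    rw [← M.J_metric X (M.J Y), M.J_sq, g_negr, neg_neg]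
  have ad : ∀ X, M.I (M.K X) = -M.J X := fun X => by rw [M.K_def, M.I_sq]
  have bd : ∀ X, M.J (M.K X) = M.I X := fun X => by
    rw [M.K_def, M.anticomm, lJ.neg, M.J_sq, neg_neg]
  refine ⟨lI, lJ, lK, M.I_sq, M.J_sq, ?_, fun X => (M.K_def X).symm, ba, bd, ?_, ?_, ad,
    ga, gb, ?_⟩
  · intro X; rw [M.K_def (M.K X), bd, M.I_sq]
  · intro X; rw [M.K_def (M.J X), M.J_sq, lI.neg]
  · intro X; rw [M.K_def (M.I X), ba, lI.neg, ad, neg_neg]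
  · intro X Y; rw [M.K_def X, ga, gb, neg_neg, ba, g_negr]

/-- the three-form `∑ Aθ ∧ ω_A` -/
def EE (A B D : V → V) (θ : V → C) : V → V → V → C := fun X Y Z =>
  wedge12 (act1 A θ) (M.omega A) X Y Z + wedge12 (act1 B θ) (M.omega B) X Y Z
    + wedge12 (act1 D θ) (M.omega D) X Y Z

theorem EE_rot (A B D : V → V) (θ : V → C) : M.EE A B D θ = M.EE B D A θ := by
  funext X Y Z; simp only [EE]; ring

variable {M}

theorem QT.skew {A B D : V → V} (h : M.QT A B D) (X Y : V) : M.g X (A Y) = -M.g Y (A X) := by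
  rw [M.g_symm, h.ga]

theorem EE_alt {A B D : V → V} (h : M.QT A B D) (θ : V → C) : IsAlt3 (M.EE A B D θ) := by
  constructor
  · intro X Y Z
    simp only [EE, wedge12, omega, act1]
    rw [h.skew Y X, h.rot.skew Y X, h.rot.rot.skew Y X]; ring
  · intro X Y Z
    simp only [EE, wedge12, omega, act1]
    rw [h.skew Z Y, h.rot.skew Z Y, h.rot.rot.skew Z Y]; ring

theorem EE_lin {A B D : V → V} (h : M.QT A B D) {θ : V → C} (hθ : Lin1 θ) :
    Lin3 (M.EE A B D θ) := by
  intro f X X' Y Z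
  simp only [EE, wedge12, omega, act1, h.la f, h.lb f, h.ld f, hθ f, M.g_add, M.g_smul]
  ring

theorem EE_calL {A B D : V → V} (h : M.QT A B D) {θ : V → C} (hθ : Lin1 θ) :
    calL A (M.EE A B D θ) = M.EE A B D θ := by
  funext X Y Z
  simp only [calL, op12, op13, op23, EE, wedge12, omega, act1, h.ga, h.aa, h.ba, h.da, h.ab, h.ad,
    h.la.neg, h.lb.neg, h.ld.neg, hθ.neg, M.g_negr, M.g_negl]
  ring

/-- the torsion tensor of a three-form -/
def FF (A B D : V → V) (M : AQH n C V) (a : C) (ψ : V → V → V → C) (θ : V → C) :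
    V → V → V → C := fun X Y Z =>
  3 * ψ X Y Z - (ψ X (A Y) (A Z) + ψ X (B Y) (B Z) + ψ X (D Y) (D Z))
    + a * (act1 A θ X * M.omega A Y Z + act1 B θ X * M.omega B Y Z + act1 D θ X * M.omega D Y Z)

theorem FF_rot (A B D : V → V) (a : C) (ψ : V → V → V → C) (θ : V → C) :
    FF A B D M a ψ θ = FF B D A M a ψ θ := by
  funext X Y Z; simp only [FF]; ring

/-- `xiEH3` in terms of `EE` -/
theorem FF_EE {A B D : V → V} (h : M.QT A B D) {θ : V → C} (hθ : Lin1 θ) (a : C) (θ' : V → C)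
    (X Y Z : V) :
    FF A B D M a (M.EE A B D θ) θ' X Y Z =
      3 * (M.g X Y * θ Z - M.g X Z * θ Y)
      + (M.omega A X Y * act1 A θ Z - M.omega A X Z * act1 A θ Y)
      + (M.omega B X Y * act1 B θ Z - M.omega B X Z * act1 B θ Y)
      + (M.omega D X Y * act1 D θ Z - M.omega D X Z * act1 D θ Y)
      + 4 * (act1 A θ X * M.omega A Y Z + act1 B θ X * M.omega B Y Z + act1 D θ X * M.omega D Y Z)
      + a * (act1 A θ' X * M.omega A Y Z + act1 B θ' X * M.omega B Y Z
        + act1 D θ' X * M.omega D Y Z) := by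
  simp only [FF, EE, wedge12, omega, act1, h.ga, h.gb, h.gd, h.aa, h.bb, h.dd, h.ab, h.ba, h.bd,
    h.db, h.da, h.ad, h.la.neg, h.lb.neg, h.ld.neg, hθ.neg, M.g_negr, M.g_negl]
  ring

/-- linearity of an alternating form in the other slots -/
theorem lin_1 {ψ : V → V → V → C} (hl : Lin3 ψ) (Y Z : V) : Lin1 (fun X => ψ X Y Z) := by
  intro f X X'; exact hl f X X' Y Z

theorem lin_2 {ψ : V → V → V → C} (ha : IsAlt3 ψ) (hl : Lin3 ψ) (X Z : V) :
    Lin1 (fun Y => ψ X Y Z) := by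
  intro f Y Y'
  have := hl f Y Y' X Z
  simp only [ha.1 _ X Z]
  linear_combination (-1 : C) * this

theorem lin_3 {ψ : V → V → V → C} (ha : IsAlt3 ψ) (hl : Lin3 ψ) (X Y : V) :
    Lin1 (fun Z => ψ X Y Z) := by
  intro f Z Z'
  have := lin_2 ha hl X Y f Z Z'
  simp only at this ⊢
  linear_combination (-1 : C) * this + ha.2 X (f • Z + Z') Y - f * ha.2 X Z Y - ha.2 X Z' Y

theorem Lam_eq {A B D : V → V} (h : M.QT A B D) {β : V → V → V → C} (ha : IsAlt3 β)
    (hl : Lin3 β) (X : V) :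
    M.Lam A β X = -((1/2:ℝ) • ∑ i, β X (M.frame i) (A (M.frame i))) := by
  rw [Lam, ← smul_neg, ← Finset.sum_neg_distrib]
  congr 1
  refine Finset.sum_congr rfl fun i _ => ?_
  have := M.contr' (lin_3 ha hl X (M.frame i)) (A (M.frame i))
  rw [← this, ← Finset.sum_neg_distrib]
  refine Finset.sum_congr rfl fun j _ => ?_
  rw [omega, h.ga]; ring

theorem Lam_lin {A : V → V} {β : V → V → V → C} (hl : Lin3 β) : Lin1 (M.Lam A β) := by
  intro f X X'
  simp only [Lam, hl f, Algebra.smul_def, add_mul, Finset.sum_add_distrib, mul_add]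
  congr 1
  simp only [Finset.mul_sum]
  refine Finset.sum_congr rfl fun i _ => Finset.sum_congr rfl fun j _ => by ring

theorem two_inj {x : C} (h : x = -x) : x = 0 := by
  have h2 : (2:ℝ) • x = 0 := by rw [two_smul]; nth_rewrite 1 [h]; simp
  have := congrArg (fun y => (1/2:ℝ) • y) h2
  simpa [smul_smul] using this

theorem half_c : (algebraMap ℝ C (1/2)) * 2 = 1 := by
  rw [← map_ofNat (algebraMap ℝ C) 2, ← map_mul]; norm_num

theorem g_self {A B D : V → V} (h : M.QT A B D) (X : V) : M.g X (A X) = 0 :=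
  two_inj (h.skew X X)

theorem Lam_EE {A B D : V → V} (h : M.QT A B D) {θ : V → C} (hθ : Lin1 θ) (X : V) :
    M.Lam A (M.EE A B D θ) X = (2 * (n:C) + 1) * act1 A θ X := by
  rw [Lam_eq h (EE_alt h θ) (EE_lin h hθ)]
  have key : ∀ i, M.EE A B D θ X (M.frame i) (A (M.frame i))
      = θ (A X) - (M.g (A X) (M.frame i) * θ (M.frame i))
        - (M.g X (M.frame i) * θ (A (M.frame i)))
        - 2 * (M.g (B X) (M.frame i) * θ (D (M.frame i)))
        + 2 * (M.g (D X) (M.frame i) * θ (B (M.frame i))) := by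
    intro i
    simp only [EE, wedge12, omega, act1, h.ga, h.gb, h.gd, h.aa, h.ba, h.da, h.ab, h.ad, h.la.neg,
      h.lb.neg, h.ld.neg, hθ.neg, M.g_negr, M.g_negl, g_self h.rot, g_self h.rot.rot,
      M.frame_orthonormal]
    simp only [if_true]
    ring
  simp only [key, Finset.sum_add_distrib, Finset.sum_sub_distrib, ← Finset.mul_sum]
  rw [M.contr' hθ, M.contr' (hθ.comp h.la), M.contr' (hθ.comp h.lb), M.contr' (hθ.comp h.ld)]
  simp only [h.db, h.bd, hθ.neg, act1, Finset.sum_const, Finset.card_univ,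
    Fintype.card_fin, nsmul_eq_mul]
  rw [Algebra.smul_def]
  push_cast
  linear_combination (-(2 * (n:C) + 1)  * θ (A X)) * (half_c (C := C))

theorem trace_eq {A B D : V → V} (h : M.QT A B D) {ψ : V → V → V → C} (ha : IsAlt3 ψ)
    (hl : Lin3 ψ) (X : V) :
    ∑ i, ψ (M.frame i) (A (M.frame i)) X = -2 * M.Lam A ψ X := by
  rw [Lam_eq h ha hl, Algebra.smul_def]
  have : ∀ i, ψ (M.frame i) (A (M.frame i)) X = ψ X (M.frame i) (A (M.frame i)) := by
    intro i
    rw [ha.2 _ X (A (M.frame i)), ha.1 X (M.frame i), neg_neg]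
  simp only [this]
  linear_combination (-∑ i, ψ X (M.frame i) (A (M.frame i))) * (half_c (C := C))

/-- the tensor `-(T(X,AY,Z) + T(X,Y,AZ))` -/
def sig (A : V → V) (F : V → V → V → C) : V → V → V → C := fun X Y Z =>
  -F X (A Y) Z - F X Y (A Z)

theorem FF_lin {A B D : V → V} (h : M.QT A B D) {ψ : V → V → V → C} (hl : Lin3 ψ)
    {θ : V → C} (hθ : Lin1 θ) (a : C) : Lin3 (FF A B D M a ψ θ) := by
  intro f X X' Y Z
  simp only [FF, act1, hl f, h.la f, h.lb f, h.ld f, hθ f]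
  ring

theorem sig_lin {A : V → V} {F : V → V → V → C} (hF : Lin3 F) : Lin3 (sig A F) := by
  intro f X X' Y Z
  simp only [sig, hF f]
  ring

theorem sig_trace {A B D : V → V} (h : M.QT A B D) {ψ : V → V → V → C} (ha : IsAlt3 ψ)
    (hl : Lin3 ψ) {θ : V → C} (hθ : Lin1 θ) (a : C) (hA : ∀ X, M.Lam A ψ X = θ (A X)) (X : V) :
    ∑ i, sig A (FF A B D M a ψ θ) (M.frame i) (M.frame i) X = (8 - 4 * a) * θ (A X) := by
  have n2 : ∀ U Y Z, ψ U (-Y) Z = -ψ U Y Z := fun U Y Z => (lin_2 ha hl U Z).neg Y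
  have n3 : ∀ U Y Z, ψ U Y (-Z) = -ψ U Y Z := fun U Y Z => (lin_3 ha hl U Y).neg Z
  have z : ∀ U Z, ψ U U Z = 0 := fun U Z => two_inj (ha.1 U U Z)
  have key : ∀ i, sig A (FF A B D M a ψ θ) (M.frame i) (M.frame i) X
      = (-4) * ψ (M.frame i) (A (M.frame i)) X
        + (-2 * a) * (M.g (M.frame i) (D X) * θ (B (M.frame i)))
        + (2 * a) * (M.g (M.frame i) (B X) * θ (D (M.frame i))) := by
    intro i
    simp only [sig, FF, omega, act1, h.ga, h.aa, h.ba, h.da, h.ab, h.ad, n2, n3, z, M.g_negr,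
      h.la.neg]
    ring
  simp only [key, Finset.sum_add_distrib, ← Finset.mul_sum]
  rw [trace_eq h ha hl, M.contr (hθ.comp h.lb), M.contr (hθ.comp h.ld), h.bd, h.db, hθ.neg, hA]
  ring

theorem FF2 {A B D : V → V} {ψ : V → V → V → C} (ha : IsAlt3 ψ) (θ : V → C) (a : C)
    (X Y Z : V) : FF A B D M a ψ θ Y X Z =
      -(3 * ψ X Y Z) + (ψ (A X) Y (A Z) + ψ (B X) Y (B Z) + ψ (D X) Y (D Z))
    + a * (act1 A θ Y * M.omega A X Z + act1 B θ Y * M.omega B X Z + act1 D θ Y * M.omega D X Z) := by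
  simp only [FF]
  rw [ha.1 X Y Z, ha.1 (A X) Y, ha.1 (B X) Y, ha.1 (D X) Y]
  ring

theorem FF3 {A B D : V → V} {ψ : V → V → V → C} (ha : IsAlt3 ψ) (θ : V → C) (a : C)
    (X Y Z : V) : FF A B D M a ψ θ Z X Y =
      3 * ψ X Y Z - (ψ (A X) (A Y) Z + ψ (B X) (B Y) Z + ψ (D X) (D Y) Z)
    + a * (act1 A θ Z * M.omega A X Y + act1 B θ Z * M.omega B X Y + act1 D θ Z * M.omega D X Y) := by
  have c : ∀ X Y, ψ Z X Y = ψ X Y Z := fun X Y => by rw [ha.1 X Z Y, ha.2 X Y Z, neg_neg]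
  simp only [FF, c]

/-- the alternation of `A_(1) sig` -/
def cyc (A : V → V) (F : V → V → V → C) : V → V → V → C := fun X Y Z =>
  sig A F (A X) Y Z - sig A F (A Y) X Z + sig A F (A Z) X Y

theorem cyc_sum {A B D : V → V} (h : M.QT A B D) {ψ : V → V → V → C} (ha : IsAlt3 ψ)
    (hl : Lin3 ψ) {θ : V → C} (hθ : Lin1 θ) (a : C) (cA : calL A ψ = ψ) (cB : calL B ψ = ψ)
    (cD : calL D ψ = ψ) (X Y Z : V) :
    cyc A (FF A B D M a ψ θ) X Y Z + cyc B (FF A B D M a ψ θ) X Y Z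
      + cyc D (FF A B D M a ψ θ) X Y Z = -24 * ψ X Y Z - 4 * a * M.EE A B D θ X Y Z := by
  have n1 : ∀ U Y Z, ψ (-U) Y Z = -ψ U Y Z := fun U Y Z => (lin_1 hl Y Z).neg U
  have n2 : ∀ U Y Z, ψ U (-Y) Z = -ψ U Y Z := fun U Y Z => (lin_2 ha hl U Z).neg Y
  have n3 : ∀ U Y Z, ψ U Y (-Z) = -ψ U Y Z := fun U Y Z => (lin_3 ha hl U Y).neg Z
  have eA := congrFun (congrFun (congrFun cA X) Y) Z
  have eB := congrFun (congrFun (congrFun cB X) Y) Z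
  have eD := congrFun (congrFun (congrFun cD X) Y) Z
  simp only [calL, op12, op13, op23] at eA eB eD
  simp only [cyc, sig]
  rw [FF2 ha θ a (A X) (A Y) Z, FF2 ha θ a X (A Y) (A Z), FF3 ha θ a (A X) Y (A Z),
    FF3 ha θ a X (A Y) (A Z), FF2 ha θ a (B X) (B Y) Z, FF2 ha θ a X (B Y) (B Z),
    FF3 ha θ a (B X) Y (B Z), FF3 ha θ a X (B Y) (B Z), FF2 ha θ a (D X) (D Y) Z,
    FF2 ha θ a X (D Y) (D Z), FF3 ha θ a (D X) Y (D Z), FF3 ha θ a X (D Y) (D Z)]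
  simp only [FF, EE, wedge12, omega, act1, h.ga, h.gb, h.gd, h.aa, h.bb, h.dd, h.ab, h.ba, h.bd,
    h.db, h.da, h.ad, h.la.neg, h.lb.neg, h.ld.neg, hθ.neg, M.g_negr, M.g_negl, n1, n2, n3,
    neg_neg]
  linear_combination (-8 : C) * eA - 8 * eB - 8 * eD

theorem wedge_contr {A : V → V} {σ : V → V → V → C} (hσ : Lin3 σ)
    (X Y Z : V) :
    ∑ i, wedge22 (σ (M.frame i)) (M.omega A) (M.frame i) X Y Z
      = wedge12 (fun X => ∑ i, σ (M.frame i) (M.frame i) X) (M.omega A) X Y Z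
        + (σ (A X) Y Z - σ (A Y) X Z + σ (A Z) X Y) := by
  rw [← M.contr (lin_1 hσ Y Z), ← M.contr (lin_1 hσ X Z), ← M.contr (lin_1 hσ X Y)]
  simp only [wedge12, Finset.sum_mul, ← Finset.sum_add_distrib, ← Finset.sum_sub_distrib]
  refine Finset.sum_congr rfl fun i _ => ?_
  simp only [wedge22, omega]
  ring

theorem D_zero (X : V) : M.D X 0 = 0 := by
  have := M.D_const X 0
  simpa using this

theorem D_neg (X : V) (f : C) : M.D X (-f) = -M.D X f := by
  have := M.D_add X f (-f)
  rw [add_neg_cancel, D_zero] at this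
  linear_combination -this

theorem D_sub (X : V) (f k : C) : M.D X (f - k) = M.D X f - M.D X k := by
  rw [sub_eq_add_neg, M.D_add, D_neg, sub_eq_add_neg]

theorem nab4_wedge (α : V → V → C) (X Y Z W U : V) :
    M.nab4 (wedge22 α α) X Y Z W U = 2 * wedge22 (M.nab2 α X) α Y Z W U := by
  simp only [nab4, nab2, wedge22, M.D_add, D_sub, M.D_mul]
  ring

theorem nab4_Omega (X Y Z W U : V) :
    M.nab4 M.Omega4 X Y Z W U = 2 * (wedge22 (M.nab2 (M.omega M.I) X) (M.omega M.I) Y Z W U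
      + wedge22 (M.nab2 (M.omega M.J) X) (M.omega M.J) Y Z W U
      + wedge22 (M.nab2 (M.omega M.K) X) (M.omega M.K) Y Z W U) := by
  rw [mul_add, mul_add, ← nab4_wedge, ← nab4_wedge, ← nab4_wedge]
  simp only [nab4, Omega4, M.D_add]
  ring

theorem nab2_omega (A : V → V) (X Y Z : V) :
    M.nab2 (M.omega A) X Y Z = M.g Y (M.nab X (A Z)) - M.g Y (A (M.nab X Z)) := by
  simp only [nab2, omega, M.nab_metric]
  ring

theorem nab_neg (X Y : V) : M.nab X (-Y) = -M.nab X Y := by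
  have h0 : M.nab X 0 = 0 := by
    have := M.nab_add X 0 0
    simpa using this
  have := M.nab_add X Y (-Y)
  rw [add_neg_cancel, h0] at this
  exact eq_neg_of_add_eq_zero_right this.symm

section real

variable [Module ℝ V] [IsScalarTower ℝ C V]

theorem g_rsmul (r : ℝ) (X Y : V) : M.g X (r • Y) = algebraMap ℝ C r * M.g X Y := by
  rw [← algebraMap_smul C r Y, g_smulr]

theorem quarter_c : (algebraMap ℝ C (1/4)) * 4 = 1 := by
  rw [← map_ofNat (algebraMap ℝ C) 4, ← map_mul]; norm_num

variable (M)

theorem g_xi (X Y Z : V) : M.g Y (M.xi X Z) = -(algebraMap ℝ C (1/4)) * (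
    3 * M.g Y (M.nab X Z) + M.g Y (M.I (M.nab X (M.I Z))) + M.g Y (M.J (M.nab X (M.J Z)))
      + M.g Y (M.K (M.nab X (M.K Z))))
    + algebraMap ℝ C (1/2) * (M.lambdaI X * M.g Y (M.I Z) + M.lambdaJ X * M.g Y (M.J Z)
      + M.lambdaK X * M.g Y (M.K Z)) := by
  have h := M.qt
  simp only [xi, nabA, M.g_addr, g_rsmul, M.g_smulr, map_neg, h.la.sub, h.lb.sub, h.ld.sub,
    M.g_subr, h.aa, h.bb, h.dd, M.g_negr]
  ring

theorem nab2_I {F : V → V → V → C} (hT : ∀ X Y Z, M.g Y (M.xi X Z) = F X Y Z) (X Y Z : V) :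
    M.nab2 (M.omega M.I) X Y Z = sig M.I F X Y Z
      + (M.lambdaK X * M.omega M.J Y Z - M.lambdaJ X * M.omega M.K Y Z) := by
  have h := M.qt
  rw [nab2_omega]
  simp only [sig, ← hT, omega, g_xi]
  simp only [h.ga, h.aa, h.bb, h.dd, h.ab, h.ba, h.bd,
    h.db, h.da, h.ad, h.la.neg, h.lb.neg, h.ld.neg, M.g_negr, nab_neg]
  linear_combination (-(M.g Y (M.nab X (M.I Z)) - M.g Y (M.I (M.nab X Z)))) * (quarter_c (C := C))
    + (M.lambdaK X * M.g Y (M.J Z) - M.lambdaJ X * M.g Y (M.K Z)) * (half_c (C := C))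

theorem nab2_J {F : V → V → V → C} (hT : ∀ X Y Z, M.g Y (M.xi X Z) = F X Y Z) (X Y Z : V) :
    M.nab2 (M.omega M.J) X Y Z = sig M.J F X Y Z
      + (M.lambdaI X * M.omega M.K Y Z - M.lambdaK X * M.omega M.I Y Z) := by
  have h := M.qt
  rw [nab2_omega]
  simp only [sig, ← hT, omega, g_xi]
  simp only [h.gb, h.aa, h.bb, h.dd, h.ab, h.ba, h.bd,
    h.db, h.da, h.ad, h.la.neg, h.lb.neg, h.ld.neg, M.g_negr, nab_neg]
  linear_combination (-(M.g Y (M.nab X (M.J Z)) - M.g Y (M.J (M.nab X Z)))) * (quarter_c (C := C))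
    + (M.lambdaI X * M.g Y (M.K Z) - M.lambdaK X * M.g Y (M.I Z)) * (half_c (C := C))

theorem nab2_K {F : V → V → V → C} (hT : ∀ X Y Z, M.g Y (M.xi X Z) = F X Y Z) (X Y Z : V) :
    M.nab2 (M.omega M.K) X Y Z = sig M.K F X Y Z
      + (M.lambdaJ X * M.omega M.I Y Z - M.lambdaI X * M.omega M.J Y Z) := by
  have h := M.qt
  rw [nab2_omega]
  simp only [sig, ← hT, omega, g_xi]
  simp only [h.gd, h.aa, h.bb, h.dd, h.ab, h.ba, h.bd,
    h.db, h.da, h.ad, h.la.neg, h.lb.neg, h.ld.neg, M.g_negr, nab_neg]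
  linear_combination (-(M.g Y (M.nab X (M.K Z)) - M.g Y (M.K (M.nab X Z)))) * (quarter_c (C := C))
    + (M.lambdaJ X * M.g Y (M.I Z) - M.lambdaI X * M.g Y (M.J Z)) * (half_c (C := C))

theorem codiff_sig {F : V → V → V → C}
    (hT : ∀ X Y Z, M.g Y (M.xi X Z) = F X Y Z) (X Y Z : V) :
    M.codiff4 M.Omega4 X Y Z = -2 * (
      ∑ i, wedge22 (sig M.I F (M.frame i)) (M.omega M.I) (M.frame i) X Y Z
      + ∑ i, wedge22 (sig M.J F (M.frame i)) (M.omega M.J) (M.frame i) X Y Z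
      + ∑ i, wedge22 (sig M.K F (M.frame i)) (M.omega M.K) (M.frame i) X Y Z) := by
  simp only [codiff4, nab4_Omega, ← Finset.sum_add_distrib, Finset.mul_sum,
    ← Finset.sum_neg_distrib]
  refine Finset.sum_congr rfl fun i _ => ?_
  simp only [wedge22, M.nab2_I hT, M.nab2_J hT, M.nab2_K hT]
  ring

/-- the codifferential of the fundamental four-form -/
theorem codiff_eq {ψ : V → V → V → C} (ha : IsAlt3 ψ) (hl : Lin3 ψ) {θ : V → C} (hθ : Lin1 θ)
    (a : C) (cI : calL M.I ψ = ψ) (cJ : calL M.J ψ = ψ) (cK : calL M.K ψ = ψ)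
    (tI : ∀ X, M.Lam M.I ψ X = θ (M.I X)) (tJ : ∀ X, M.Lam M.J ψ X = θ (M.J X))
    (tK : ∀ X, M.Lam M.K ψ X = θ (M.K X))
    (hT : ∀ X Y Z, M.g Y (M.xi X Z) = FF M.I M.J M.K M a ψ θ X Y Z) (X Y Z : V) :
    M.codiff4 M.Omega4 X Y Z = 48 * ψ X Y Z + 16 * M.EE M.I M.J M.K θ X Y Z := by
  have h := M.qt
  have hF := FF_lin h hl hθ a
  rw [M.codiff_sig hT, wedge_contr (sig_lin hF), wedge_contr (sig_lin hF),
    wedge_contr (sig_lin hF)]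
  have sI := sig_trace h ha hl hθ a tI
  have sJ := sig_trace h.rot ha hl hθ a tJ
  have sK := sig_trace h.rot.rot ha hl hθ a tK
  rw [← FF_rot] at sJ
  rw [FF_rot] at sK
  have hc := cyc_sum h ha hl hθ a cI cJ cK X Y Z
  simp only [cyc] at hc
  simp only [sI, sJ, sK]
  simp only [EE, wedge12, act1] at hc ⊢
  linear_combination -2 * hc

theorem Lam_comb (A : V → V) (p q : C) (β γ : V → V → V → C) (X : V) :
    M.Lam A (fun X Y Z => p * β X Y Z + q * γ X Y Z) X = p * M.Lam A β X + q * M.Lam A γ X := by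
  simp only [Lam, Algebra.smul_def, Finset.mul_sum, ← Finset.sum_add_distrib]
  refine Finset.sum_congr rfl fun i _ => Finset.sum_congr rfl fun j _ => by ring

theorem third_c : (algebraMap ℝ C (1/3)) * 3 = 1 := by
  rw [← map_ofNat (algebraMap ℝ C) 3, ← map_mul]; norm_num

theorem formula {ψ : V → V → V → C} (ha : IsAlt3 ψ) (hl : Lin3 ψ) {θ : V → C} (hθ : Lin1 θ)
    (a : C) (cI : calL M.I ψ = ψ) (cJ : calL M.J ψ = ψ) (cK : calL M.K ψ = ψ)
    (tI : ∀ X, M.Lam M.I ψ X = θ (M.I X)) (tJ : ∀ X, M.Lam M.J ψ X = θ (M.J X))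
    (tK : ∀ X, M.Lam M.K ψ X = θ (M.K X))
    (hT : ∀ X Y Z, M.g Y (M.xi X Z) = FF M.I M.J M.K M a ψ θ X Y Z) (X Y Z : V) :
    (48*((n:ℝ)-1)) • ψ X Y Z
        = ((n:ℝ)-1) • M.codiff4 M.Omega4 X Y Z
          + (1/2:ℝ) • (wedge12 (act1 M.I M.thetaDOmega) (M.omega M.I) X Y Z
              + wedge12 (act1 M.J M.thetaDOmega) (M.omega M.J) X Y Z
              + wedge12 (act1 M.K M.thetaDOmega) (M.omega M.K) X Y Z) := by
  have h := M.qt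
  have hD : M.codiff4 M.Omega4 = fun X Y Z => 48 * ψ X Y Z + 16 * M.EE M.I M.J M.K θ X Y Z := by
    funext X Y Z
    exact M.codiff_eq ha hl hθ a cI cJ cK tI tJ tK hT X Y Z
  have lJ : ∀ X, M.Lam M.J (M.EE M.I M.J M.K θ) X = (2 * (n:C) + 1) * act1 M.J θ X := by
    rw [EE_rot]; exact Lam_EE h.rot hθ
  have lK : ∀ X, M.Lam M.K (M.EE M.I M.J M.K θ) X = (2 * (n:C) + 1) * act1 M.K θ X := by
    rw [EE_rot, EE_rot]; exact Lam_EE h.rot.rot hθ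
  have hθD : M.thetaDOmega = fun X => (32 - 32 * (n:C)) * θ X := by
    funext X
    simp only [thetaDOmega, hD, act1, Lam_comb, Lam_EE h hθ, lJ, lK, tI, tJ, tK, h.aa, h.bb, h.dd,
      hθ.neg, Algebra.smul_def]
    linear_combination (32 - 32 * (n:C)) * θ X * third_c (C := C)
  rw [hθD, hD]
  simp only [EE, wedge12, act1, Algebra.smul_def, map_mul, map_sub, map_one, map_natCast,
    map_ofNat]
  linear_combination (-(16 - 16 * (n:C)) * (
    (-θ (M.I X) * M.omega M.I Y Z + θ (M.I Y) * M.omega M.I X Z - θ (M.I Z) * M.omega M.I X Y)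
    + (-θ (M.J X) * M.omega M.J Y Z + θ (M.J Y) * M.omega M.J X Z - θ (M.J Z) * M.omega M.J X Y)
    + (-θ (M.K X) * M.omega M.K Y Z + θ (M.K Y) * M.omega M.K X Z - θ (M.K Z) * M.omega M.K X Y)))
    * half_c (C := C)

theorem contr₂ {A : V → V} (hA : LinA C A) (X Y Z : V) (p q : C) :
    ∑ i, M.g (M.frame i) X * (M.g (A (M.frame i)) Y * p - M.g (A (M.frame i)) Z * q)
      = M.g (A X) Y * p - M.g (A X) Z * q := by
  refine M.contr (ν := fun U => M.g (A U) Y * p - M.g (A U) Z * q) ?_ X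
  intro f U U'
  simp only [hA f, M.g_add, M.g_smul]
  ring

theorem core (hn : (n:ℝ) ≠ 0) {θ θ' : V → C} (hθ : Lin1 θ) {ψ ψK : V → V → V → C}
    (hψ : ∀ X Y Z, ψ X Y Z = ψK X Y Z + M.EE M.I M.J M.K θ X Y Z)
    (hθ' : ∀ X, θ' X = -(2 * (n:C) + 1) * θ X) (X Y Z : V) :
    FF M.I M.J M.K M (algebraMap ℝ C (2/(n:ℝ))) ψ θ' X Y Z
      = M.xiKH3 ψK X Y Z + M.xiEH3 θ X Y Z := by
  have h := M.qt
  have e1 : FF M.I M.J M.K M (algebraMap ℝ C (2/(n:ℝ))) ψ θ' X Y Z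
      = M.xiKH3 ψK X Y Z
        + FF M.I M.J M.K M (algebraMap ℝ C (2/(n:ℝ))) (M.EE M.I M.J M.K θ) θ' X Y Z := by
    simp only [FF, hψ, xiKH3, op23, Algebra.smul_def, map_ofNat]
    ring
  have hc : algebraMap ℝ C (2/(n:ℝ)) * (n:C) = 2 := by
    rw [← map_natCast (algebraMap ℝ C) n, ← map_mul, div_mul_cancel₀ _ hn, map_ofNat]
  rw [e1, FF_EE h hθ]
  have hid := M.contr₂ (A := fun X => X) (fun f X Y => rfl) X Y Z (θ Z) (θ Y)
  simp only [xiEH3, hid, M.contr₂ h.la, M.contr₂ h.lb, M.contr₂ h.ld, Algebra.smul_def, map_ofNat]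
  simp only [act1, hθ', omega, h.ga, h.gb, h.gd]
  linear_combination (2 * (θ (M.I X) * M.g Y (M.I Z) + θ (M.J X) * M.g Y (M.J Z)
    + θ (M.K X) * M.g Y (M.K Z))) * hc

/-- unpacking of `KEHparam` -/
theorem param_theta {ψ : V → V → V → C} (hψ : M.KEHparam ψ) :
    ∃ θ : V → C, θ = act1 M.I (M.Lam M.I ψ) ∧ Lin1 θ ∧ (∀ X, M.Lam M.I ψ X = θ (M.I X)) ∧
      (∀ X, M.Lam M.J ψ X = θ (M.J X)) ∧ (∀ X, M.Lam M.K ψ X = θ (M.K X)) ∧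
      (∀ X Y Z, M.g Y (M.xi X Z)
        = FF M.I M.J M.K M (algebraMap ℝ C (2/(n:ℝ))) ψ θ X Y Z) := by
  have h := M.qt
  obtain ⟨ha, hl, cI, cJ, cK, e1, e2, hT⟩ := hψ
  refine ⟨_, rfl, (Lam_lin hl).act h.la, ?_, ?_, ?_, ?_⟩
  · intro X
    simp only [act1, h.aa, (Lam_lin hl).neg, neg_neg]
  · intro X
    rw [e1]
    simp only [act1, h.bb, (Lam_lin hl).neg, neg_neg]
  · intro X
    rw [e1, e2]
    simp only [act1, h.dd, (Lam_lin hl).neg, neg_neg]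
  · intro X Y Z
    rw [hT]
    simp only [FF, op23, Algebra.smul_def, map_ofNat]

theorem param_formula {ψ : V → V → V → C} (hψ : M.KEHparam ψ) (X Y Z : V) :
    (48*((n:ℝ)-1)) • ψ X Y Z
        = ((n:ℝ)-1) • M.codiff4 M.Omega4 X Y Z
          + (1/2:ℝ) • (wedge12 (act1 M.I M.thetaDOmega) (M.omega M.I) X Y Z
              + wedge12 (act1 M.J M.thetaDOmega) (M.omega M.J) X Y Z
              + wedge12 (act1 M.K M.thetaDOmega) (M.omega M.K) X Y Z) := by
  obtain ⟨θ, _, hθ, tI, tJ, tK, hT⟩ := M.param_theta hψ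
  obtain ⟨ha, hl, cI, cJ, cK, -⟩ := hψ
  exact M.formula ha hl hθ _ cI cJ cK tI tJ tK hT X Y Z

/-- properties of combinations `ψ + c ∑ Aθ ∧ ω_A` -/
theorem comb_props {θ : V → C} (hθ : Lin1 θ) {ψ : V → V → V → C} (c : C) (ha : IsAlt3 ψ)
    (hl : Lin3 ψ) (cI : calL M.I ψ = ψ) (cJ : calL M.J ψ = ψ) (cK : calL M.K ψ = ψ)
    {φ : V → V → V → C} (hφ : φ = fun X Y Z => 1 * ψ X Y Z + c * M.EE M.I M.J M.K θ X Y Z) :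
    IsAlt3 φ ∧ Lin3 φ ∧ calL M.I φ = φ ∧ calL M.J φ = φ ∧ calL M.K φ = φ ∧
      (∀ X, M.Lam M.I φ X = M.Lam M.I ψ X - c * (2 * (n:C) + 1) * θ (M.I X)) ∧
      (∀ X, M.Lam M.J φ X = M.Lam M.J ψ X - c * (2 * (n:C) + 1) * θ (M.J X)) ∧
      (∀ X, M.Lam M.K φ X = M.Lam M.K ψ X - c * (2 * (n:C) + 1) * θ (M.K X)) := by
  have h := M.qt
  have lJ : ∀ X, M.Lam M.J (M.EE M.I M.J M.K θ) X = (2 * (n:C) + 1) * act1 M.J θ X := by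
    rw [EE_rot]; exact Lam_EE h.rot hθ
  have lK : ∀ X, M.Lam M.K (M.EE M.I M.J M.K θ) X = (2 * (n:C) + 1) * act1 M.K θ X := by
    rw [EE_rot, EE_rot]; exact Lam_EE h.rot.rot hθ
  have dI := EE_calL h hθ
  have dJ := EE_calL h.rot hθ
  have dK := EE_calL h.rot.rot hθ
  rw [← EE_rot] at dJ
  rw [EE_rot] at dK
  have hE := EE_alt h θ
  have hEl := EE_lin h hθ
  have hcal : ∀ A : V → V, calL A ψ = ψ → calL A (M.EE M.I M.J M.K θ) = M.EE M.I M.J M.K θ →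
      calL A φ = φ := by
    intro A h1 h2
    funext X Y Z
    have e1 := congrFun (congrFun (congrFun h1 X) Y) Z
    have e2 := congrFun (congrFun (congrFun h2 X) Y) Z
    simp only [calL, op12, op13, op23] at e1 e2
    simp only [hφ, calL, op12, op13, op23]
    linear_combination e1 + c * e2
  refine ⟨⟨?_, ?_⟩, ?_, hcal _ cI dI, hcal _ cJ dJ, hcal _ cK dK, ?_, ?_, ?_⟩
  · intro X Y Z
    simp only [hφ]
    linear_combination ha.1 X Y Z + c * hE.1 X Y Z
  · intro X Y Z
    simp only [hφ]
    linear_combination ha.2 X Y Z + c * hE.2 X Y Z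
  · intro f X X' Y Z
    simp only [hφ]
    linear_combination hl f X X' Y Z + c * hEl f X X' Y Z
  · intro X
    rw [hφ, Lam_comb, Lam_EE h hθ, act1]; ring
  · intro X
    rw [hφ, Lam_comb, lJ, act1]; ring
  · intro X
    rw [hφ, Lam_comb, lK, act1]; ring

end real

end proofs

end AQH

open AQH in
/-- The intrinsic torsion `ξ` of an almost
quaternion-Hermitian `4n`-manifold (`n > 1`) lies in `(K+E)H` precisely when it
is given by a three-form `ψ ∈ (K+E)H ⊂ Λ³T*M` via
`⟨Y, ξ_X Z⟩ = (3ψ + Σ_A (-A_(23)ψ + (2/n) Aθ^ψ ⊗ ω_A))(X,Y,Z)`,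
`θ^ψ = IΛ_Iψ = JΛ_Jψ = KΛ_Kψ`.  Moreover such a `ψ` is unique and given by
`48(n-1)ψ = (n-1) d*Ω + (1/2) Σ_A Aθ^{d*Ω} ∧ ω_A`. -/
theorem statement13 {n : ℕ} {C V : Type*} [CommRing C] [Algebra ℝ C] [AddCommGroup V]
    [Module C V] [Module ℝ V] [IsScalarTower ℝ C V]
    (hn : 1 < n) (M : AQH n C V) :
    (M.inKEH ↔ ∃ ψ : V → V → V → C, M.KEHparam ψ) ∧
    (∀ ψ ψ' : V → V → V → C, M.KEHparam ψ → M.KEHparam ψ' → ψ = ψ') ∧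
    (∀ ψ : V → V → V → C, M.KEHparam ψ →
      ∀ X Y Z, (48*((n:ℝ)-1)) • ψ X Y Z
        = ((n:ℝ)-1) • M.codiff4 M.Omega4 X Y Z
          + (1/2:ℝ) • (wedge12 (act1 M.I M.thetaDOmega) (M.omega M.I) X Y Z
              + wedge12 (act1 M.J M.thetaDOmega) (M.omega M.J) X Y Z
              + wedge12 (act1 M.K M.thetaDOmega) (M.omega M.K) X Y Z)) := by
  have h := M.qt
  have hn0 : (n:ℝ) ≠ 0 := by
    have : n ≠ 0 := by omega
    exact_mod_cast this
  refine ⟨⟨?_, ?_⟩, ?_, fun ψ hψ => M.param_formula hψ⟩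
  · rintro ⟨ψK, θ, ⟨ha, hl, cI, cJ, cK, LI, LJ, LK⟩, hθ, hT⟩
    obtain ⟨ha', hl', cI', cJ', cK', tI, tJ, tK⟩ := M.comb_props hθ 1 ha hl cI cJ cK rfl
    refine ⟨_, ha', hl', cI', cJ', cK', ?_, ?_, ?_⟩
    · funext X
      simp only [act1, tI, tJ, LI, LJ, h.aa, h.bb, Pi.zero_apply]
    · funext X
      simp only [act1, tJ, tK, LJ, LK, h.bb, h.dd, Pi.zero_apply]
    · intro X Y Z
      rw [hT, ← M.core hn0 hθ (θ' := act1 M.I (M.Lam M.I (fun X Y Z => 1 * ψK X Y Z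
        + 1 * M.EE M.I M.J M.K θ X Y Z))) (ψ := fun X Y Z => 1 * ψK X Y Z
        + 1 * M.EE M.I M.J M.K θ X Y Z) (fun X Y Z => by ring) (fun X => by
          rw [act1, tI, LI, h.aa, hθ.neg, Pi.zero_apply]; ring)]
      simp only [FF, op23, Algebra.smul_def, map_ofNat]
  · rintro ⟨ψ, hψ⟩
    obtain ⟨θ', -, hθ', tI, tJ, tK, hT⟩ := M.param_theta hψ
    obtain ⟨ha, hl, cI, cJ, cK, -⟩ := hψ
    obtain ⟨c, hc⟩ : ∃ c : C, c * (2 * (n:C) + 1) = 1 := by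
      refine ⟨algebraMap ℝ C (1 / (2 * (n:ℝ) + 1)), ?_⟩
      have h1 : (2 * (n:C) + 1) = algebraMap ℝ C (2 * (n:ℝ) + 1) := by
        rw [map_add, map_mul, map_one, map_natCast, map_ofNat]
      have h2 : (2 * (n:ℝ) + 1) ≠ 0 := by positivity
      rw [h1, ← map_mul, one_div_mul_cancel h2, map_one]
    have hθ : Lin1 (fun X => -c * θ' X) := by
      intro f X X'
      simp only [hθ' f]; ring
    obtain ⟨ha', hl', cI', cJ', cK', sI, sJ, sK⟩ := M.comb_props hθ (-1) ha hl cI cJ cK rfl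
    refine ⟨_, _, ⟨ha', hl', cI', cJ', cK', ?_, ?_, ?_⟩, hθ, ?_⟩
    · funext X
      rw [sI, tI, Pi.zero_apply]
      linear_combination (-θ' (M.I X)) * hc
    · funext X
      rw [sJ, tJ, Pi.zero_apply]
      linear_combination (-θ' (M.J X)) * hc
    · funext X
      rw [sK, tK, Pi.zero_apply]
      linear_combination (-θ' (M.K X)) * hc
    · intro X Y Z
      rw [hT]
      refine M.core hn0 hθ (fun X Y Z => by ring) (fun X => ?_) X Y Z
      linear_combination (-θ' X) * hc
  · intro ψ ψ' hψ hψ'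
    funext X Y Z
    have e := (M.param_formula hψ X Y Z).trans (M.param_formula hψ' X Y Z).symm
    have hz : (48*((n:ℝ)-1)) ≠ 0 := by
      have : (1:ℝ) < n := by exact_mod_cast hn
      have : (n:ℝ) - 1 ≠ 0 := by linarith
      positivity
    have e' := congrArg (fun y => (48*((n:ℝ)-1))⁻¹ • y) e
    simpa only [smul_smul, inv_mul_cancel₀ hz, one_smul] using e'
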